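/- arXiv:1910.09829 — 2 statements merged into one kernel-verified Lean document; each statement's English description precedes it below -/
import Mathlib

section
/- Under reach value invisibility, the LSTS underlying a Petri net is labelled consistently for linear propositions: for all paths π, π' through reachable markings starting in a common reachable marking, if π and π' are weakly equivalent with respect to the set of reach value invisible structural transitions, then π and π' are stutter equivalent under the labelling L_l by linear propositions. -/
open scoped Classical

/-- The subsequence of an `Option`-valued sequence consisting of the values at the
indices satisfying `P`, in increasing order (`none` past the end when only finitely
many indices satisfy `P`). -/
noncomputable def subseq {α : Type*} (g : ℕ → Option α) (P : ℕ → Prop) : ℕ → Option α :=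
  fun k => if {i | P i}.Infinite ∨ k < {i | P i}.ncard then g (Nat.nth P k) else none

/-- The no-stutter trace of a sequence of labels (`none` marking positions past the end
of a finite sequence): the subsequence of those values at indices `i` such that `i = 0`
or the value differs from the one at `i - 1`. -/
noncomputable def nsTrace {α : Type*} (g : ℕ → Option α) : ℕ → Option α :=
  subseq g fun i => (g i).isSome ∧ (i = 0 ∨ g i ≠ g (i - 1))

/-- A (finite or infinite) path of a transition relation `Tr`.  `len` is the number of
transitions (`⊤` for an infinite path); the values of `states` and `acts` beyond the
length are irrelevant junk. -/
structure TPath {S : Type*} {A : Type*} (Tr : S → A → S → Prop) where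
  states : ℕ → S
  acts : ℕ → A
  len : ℕ∞
  valid : ∀ i : ℕ, (i : ℕ∞) < len → Tr (states i) (acts i) (states (i + 1))

/-- The sequence of state labels along a path (`none` beyond the end). -/
noncomputable def TPath.labelSeq {S A l : Type*}
    {Tr : S → A → S → Prop} (p : TPath Tr) (L : S → Set l) : ℕ → Option (Set l) :=
  fun i => if (i : ℕ∞) ≤ p.len then some (L (p.states i)) else none

/-- The sequence of actions along a path (`none` beyond the end). -/
noncomputable def TPath.actSeq {S A : Type*}
    {Tr : S → A → S → Prop} (p : TPath Tr) : ℕ → Option A :=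
  fun i => if (i : ℕ∞) < p.len then some (p.acts i) else none

/-- Stutter equivalence of two paths with respect to labellings `L₁`, `L₂`:
both are finite or both are infinite, and they have the same no-stutter trace. -/
def StutterEquiv {S₁ A₁ S₂ A₂ l : Type*}
    {Tr₁ : S₁ → A₁ → S₁ → Prop} {Tr₂ : S₂ → A₂ → S₂ → Prop}
    (L₁ : S₁ → Set l) (L₂ : S₂ → Set l) (p : TPath Tr₁) (q : TPath Tr₂) : Prop :=
  (p.len = ⊤ ↔ q.len = ⊤) ∧ nsTrace (p.labelSeq L₁) = nsTrace (q.labelSeq L₂)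

/-- Weak equivalence of two paths with respect to a set `I` of invisible actions:
both are finite or both are infinite, and the projections of their action sequences
onto the visible actions (those not in `I`) are equal. -/
def WeakEquiv {S₁ S₂ A : Type*}
    {Tr₁ : S₁ → A → S₁ → Prop} {Tr₂ : S₂ → A → S₂ → Prop}
    (I : Set A) (p : TPath Tr₁) (q : TPath Tr₂) : Prop :=
  (p.len = ⊤ ↔ q.len = ⊤) ∧
    subseq p.actSeq (fun i => (i : ℕ∞) < p.len ∧ p.acts i ∉ I) =
      subseq q.actSeq (fun i => (i : ℕ∞) < q.len ∧ q.acts i ∉ I)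

/-- A finite run of length `n` along `Tr`: `σ 0 -α 0→ σ 1 -α 1→ ⋯ -α (n-1)→ σ n`. -/
def FinRun {S A : Type*} (Tr : S → A → S → Prop) (n : ℕ) (σ : ℕ → S) (α : ℕ → A) : Prop :=
  ∀ i < n, Tr (σ i) (α i) (σ (i + 1))

/-- `a` is a key action in `s` w.r.t. the reduction function `r`: for all
`a₁, …, aₙ ∉ r s` and paths `s -a₁…aₙ→ s'`, the action `a` is enabled in `s'`. -/
def KeyAction {S A : Type*} (Tr : S → A → S → Prop) (r : S → Set A) (s : S) (a : A) : Prop :=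
  ∀ (n : ℕ) (σ : ℕ → S) (α : ℕ → A), σ 0 = s → FinRun Tr n σ α →
    (∀ i < n, α i ∉ r s) → ∃ t, Tr (σ n) a t

/-- Condition D0: if some action is enabled in `s`, then `r s` contains an enabled action. -/
def CondD0 {S A : Type*} (Tr : S → A → S → Prop) (r : S → Set A) (s : S) : Prop :=
  (∃ a t, Tr s a t) → ∃ a ∈ r s, ∃ t, Tr s a t

/-- Condition D1. -/
def CondD1 {S A : Type*} (Tr : S → A → S → Prop) (r : S → Set A) (s : S) : Prop :=
  ∀ a ∈ r s, ∀ (n : ℕ) (σ : ℕ → S) (α : ℕ → A) (sn' : S),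
    σ 0 = s → FinRun Tr n σ α → (∀ i < n, α i ∉ r s) → Tr (σ n) a sn' →
    ∃ σ' : ℕ → S, Tr s a (σ' 0) ∧ FinRun Tr n σ' α ∧ σ' n = sn'

/-- Condition D1' (strengthened D1): additionally, if `a` is invisible then
`sᵢ -a→ s'ᵢ` for every `1 ≤ i < n`. -/
def CondD1' {S A : Type*} (Tr : S → A → S → Prop) (I : Set A) (r : S → Set A) (s : S) : Prop :=
  ∀ a ∈ r s, ∀ (n : ℕ) (σ : ℕ → S) (α : ℕ → A) (sn' : S),
    σ 0 = s → FinRun Tr n σ α → (∀ i < n, α i ∉ r s) → Tr (σ n) a sn' →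
    ∃ σ' : ℕ → S, Tr s a (σ' 0) ∧ FinRun Tr n σ' α ∧ σ' n = sn' ∧
      (a ∈ I → ∀ i, 1 ≤ i → i < n → Tr (σ i) a (σ' i))

/-- Condition D2: every enabled action of `r s` is a key action in `s`. -/
def CondD2 {S A : Type*} (Tr : S → A → S → Prop) (r : S → Set A) (s : S) : Prop :=
  ∀ a ∈ r s, (∃ t, Tr s a t) → KeyAction Tr r s a

/-- Condition D2w: if some action is enabled in `s`, then `r s` contains a key action. -/
def CondD2w {S A : Type*} (Tr : S → A → S → Prop) (r : S → Set A) (s : S) : Prop :=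
  (∃ a t, Tr s a t) → ∃ a ∈ r s, KeyAction Tr r s a

/-- Condition V: if `r s` contains an enabled visible action, it contains all visible
actions. -/
def CondV {S A : Type*} (Tr : S → A → S → Prop) (I : Set A) (r : S → Set A) (s : S) : Prop :=
  (∃ a ∈ r s, a ∉ I ∧ ∃ t, Tr s a t) → ∀ a, a ∉ I → a ∈ r s

/-- Condition I: if an invisible action is enabled in `s`, then `r s` contains an
invisible key action. -/
def CondI {S A : Type*} (Tr : S → A → S → Prop) (I : Set A) (r : S → Set A) (s : S) : Prop :=
  (∃ a ∈ I, ∃ t, Tr s a t) → ∃ a ∈ r s, a ∈ I ∧ KeyAction Tr r s a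

/-- The states of the reduced LSTS: the smallest set of states containing the initial
state `s0` and closed under transitions labelled with actions of the stubborn set. -/
inductive RedReach {S A : Type*} (Tr : S → A → S → Prop) (r : S → Set A) (s0 : S) : S → Prop
  | refl : RedReach Tr r s0 s0
  | step {s a t} : RedReach Tr r s0 s → a ∈ r s → Tr s a t → RedReach Tr r s0 t

/-- The transition relation of the reduced LSTS. -/
def RedTr {S A : Type*} (Tr : S → A → S → Prop) (r : S → Set A) (s0 : S) :
    S → A → S → Prop :=
  fun s a t => RedReach Tr r s0 s ∧ a ∈ r s ∧ Tr s a t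

/-- Condition L: for every visible action `a`, every cycle in the reduced LSTS
contains a state `s` with `a ∈ r s`. -/
def CondL {S A : Type*} (Tr : S → A → S → Prop) (I : Set A) (r : S → Set A) (s0 : S) : Prop :=
  ∀ a ∉ I, ∀ (n : ℕ) (σ : ℕ → S) (α : ℕ → A), 0 < n →
    FinRun (RedTr Tr r s0) n σ α → σ n = σ 0 → ∃ i < n, a ∈ r (σ i)

/-- Condition C4: either `r s` consists of all actions, or `r s` contains precisely one
enabled action. -/
def CondC4 {S A : Type*} (Tr : S → A → S → Prop) (r : S → Set A) (s : S) : Prop :=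
  r s = Set.univ ∨ ∃! a, a ∈ r s ∧ ∃ t, Tr s a t

/-- `I` is a set of invisible actions w.r.t. the labelling `L`. -/
def InvisibleSet {S A l : Type*} (Tr : S → A → S → Prop) (L : S → Set l) (I : Set A) : Prop :=
  ∀ a ∈ I, ∀ s t, Tr s a t → L s = L t

/-- Reachability along `Tr`. -/
inductive Reach {S A : Type*} (Tr : S → A → S → Prop) (s0 : S) : S → Prop
  | refl : Reach Tr s0 s0
  | step {s a t} : Reach Tr s0 s → Tr s a t → Reach Tr s0 t

/-- Stutter-trace equivalence of two systems: for every initial path of the one there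
is a stutter equivalent initial path of the other, and vice versa. -/
def StutterTraceEquiv {S₁ A₁ S₂ A₂ l : Type*} (Tr₁ : S₁ → A₁ → S₁ → Prop) (i₁ : S₁)
    (L₁ : S₁ → Set l) (Tr₂ : S₂ → A₂ → S₂ → Prop) (i₂ : S₂) (L₂ : S₂ → Set l) : Prop :=
  (∀ p : TPath Tr₁, p.states 0 = i₁ →
      ∃ q : TPath Tr₂, q.states 0 = i₂ ∧ StutterEquiv L₁ L₂ p q) ∧
  (∀ q : TPath Tr₂, q.states 0 = i₂ →
      ∃ p : TPath Tr₁, p.states 0 = i₁ ∧ StutterEquiv L₁ L₂ p q)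

/-- Weak-trace equivalence of two systems with the same set `I` of invisible actions. -/
def WeakTraceEquiv {S₁ S₂ A : Type*} (Tr₁ : S₁ → A → S₁ → Prop) (i₁ : S₁)
    (Tr₂ : S₂ → A → S₂ → Prop) (i₂ : S₂) (I : Set A) : Prop :=
  (∀ p : TPath Tr₁, p.states 0 = i₁ → ∃ q : TPath Tr₂, q.states 0 = i₂ ∧ WeakEquiv I p q) ∧
  (∀ q : TPath Tr₂, q.states 0 = i₂ → ∃ p : TPath Tr₁, p.states 0 = i₁ ∧ WeakEquiv I p q)

/-- An LSTS is labelled consistently iff any two weakly equivalent paths starting in a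
common state are stutter equivalent. -/
def LabelledConsistently {S A l : Type*} (Tr : S → A → S → Prop) (L : S → Set l)
    (I : Set A) : Prop :=
  ∀ p q : TPath Tr, p.states 0 = q.states 0 → WeakEquiv I p q → StutterEquiv L L p q

/-- Label sequence of an explicitly given finite run with `n` transitions. -/
noncomputable def finLabelSeq {S l : Type*} (L : S → Set l) (n : ℕ) (σ : ℕ → S) :
    ℕ → Option (Set l) :=
  fun i => if i ≤ n then some (L (σ i)) else none

/-- Stutter equivalence of two explicitly given finite runs (with `n`, resp. `m`,
transitions); both are finite, so it only requires equality of no-stutter traces. -/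
def FinStutterEquiv {S l : Type*} (L : S → Set l) (n : ℕ) (σ : ℕ → S) (m : ℕ)
    (τ : ℕ → S) : Prop :=
  nsTrace (finLabelSeq L n σ) = nsTrace (finLabelSeq L m τ)

/-- Stutter equivalence of two explicitly given infinite runs; both are infinite, so it
only requires equality of no-stutter traces. -/
def InfStutterEquiv {S l : Type*} (L : S → Set l) (σ τ : ℕ → S) : Prop :=
  nsTrace (fun i => some (L (σ i))) = nsTrace (fun i => some (L (τ i)))

/-- A Petri net over places `P` and structural transitions `T`:
`pre p t = W(p,t)`, `post t p = W(t,p)`, and initial marking `m0`. -/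
structure PetriNet (P T : Type*) where
  pre : P → T → ℕ
  post : T → P → ℕ
  m0 : P → ℕ

/-- The firing relation of a Petri net: `m -t→ m'` iff `W(p,t) ≤ m(p)` and
`m'(p) = m(p) - W(p,t) + W(t,p)` for all places `p`. -/
def PetriNet.Fires {P T : Type*} (N : PetriNet P T) (m : P → ℕ) (t : T) (m' : P → ℕ) : Prop :=
  ∀ p, N.pre p t ≤ m p ∧ m' p = m p - N.pre p t + N.post t p

/-- Comparison operators `⋈ ∈ {<, ≤, >, ≥, =, ≠}`. -/
inductive Cmp : Type
  | lt | le | gt | ge | eq | ne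

/-- Semantics of the comparison operators. -/
def Cmp.holds : Cmp → ℤ → ℤ → Prop
  | .lt, x, y => x < y
  | .le, x, y => x ≤ y
  | .gt, x, y => x > y
  | .ge, x, y => x ≥ y
  | .eq, x, y => x = y
  | .ne, x, y => x ≠ y

/-- A linear proposition `k₁·p₁ + ⋯ + kₙ·pₙ ⋈ k`. -/
structure LinProp (P : Type*) where
  coef : P → ℤ
  cmp : Cmp
  const : ℤ

/-- The value of the linear left-hand side of a linear proposition in a marking. -/
def LinProp.value {P : Type*} [Fintype P] (q : LinProp P) (m : P → ℕ) : ℤ :=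
  ∑ p, q.coef p * (m p : ℤ)

/-- Satisfaction of a linear proposition in a marking. -/
def LinProp.sat {P : Type*} [Fintype P] (q : LinProp P) (m : P → ℕ) : Prop :=
  q.cmp.holds (q.value m) q.const

/-- A polynomial proposition `f(p₁,…,pₙ) ⋈ k`. -/
structure PolyProp (P : Type*) where
  poly : MvPolynomial P ℤ
  cmp : Cmp
  const : ℤ

/-- The value of the left-hand-side polynomial of a polynomial proposition in a marking. -/
noncomputable def PolyProp.value {P : Type*} (q : PolyProp P) (m : P → ℕ) : ℤ :=
  MvPolynomial.eval (fun p => (m p : ℤ)) q.poly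

/-- Satisfaction of a polynomial proposition in a marking. -/
def PolyProp.sat {P : Type*} (q : PolyProp P) (m : P → ℕ) : Prop :=
  q.cmp.holds (q.value m) q.const

/-!
Firing a transition `t` changes the value of every linear left-hand side by an amount that depends
only on `t`, not on the marking. Hence the values after `i` transitions are determined by the
initial values and the visible transitions among these `i`, since the invisible ones leave the
values unchanged. The label sequence of a path is therefore a stuttering of the label sequence of
the deterministic run of its visible word on value vectors, and weakly equivalent paths share that
run.
-/

section Subsequences

variable {α : Type*} {g f : ℕ → Option α} {P R : ℕ → Prop} {c : ℕ → ℕ} {i : ℕ}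

theorem subseq_count [DecidablePred P] (hi : P i) :
    subseq g P (Nat.count P i) = g i := by
  have hvalid : {i | P i}.Infinite ∨ Nat.count P i < {i | P i}.ncard := by
    refine or_iff_not_imp_left.2 fun hinf => ?_
    have hfin : {i | P i}.Finite := Set.not_infinite.1 hinf
    simpa [Set.ncard_eq_toFinset_card _ hfin] using Nat.count_lt_card hfin hi
  rw [subseq, if_pos hvalid, Nat.nth_count hi]

theorem exists_count_eq_of_isSome_subseq [DecidablePred P] {k : ℕ}
    (hk : (subseq g P k).isSome) : ∃ i, P i ∧ Nat.count P i = k := by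
  rw [subseq] at hk
  split_ifs at hk with hvalid
  · have hcard (hfin : {i | P i}.Finite) : k < hfin.toFinset.card := by
      rw [← Set.ncard_eq_toFinset_card _ hfin]
      exact hvalid.resolve_left (Set.not_infinite.2 hfin)
    exact ⟨Nat.nth P k, Nat.nth_mem k hcard, Nat.count_nth hcard⟩
  · simp at hk

theorem subseq_eq_some_iff [DecidablePred P] {k : ℕ} {a : α} :
    subseq g P k = some a ↔ ∃ i, P i ∧ Nat.count P i = k ∧ g i = some a := by
  constructor
  · intro hk
    obtain ⟨i, hi, rfl⟩ := exists_count_eq_of_isSome_subseq (Option.isSome_of_eq_some hk)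
    exact ⟨i, hi, rfl, (subseq_count hi).symm.trans hk⟩
  · rintro ⟨i, hi, rfl, hg⟩
    rw [subseq_count hi, hg]

theorem count_apply_of_strictMonoOn [DecidablePred P] [DecidablePred R]
    (hmono : StrictMonoOn c {i | P i}) (himage : c '' {i | P i} = {j | R j})
    (hi : P i) : Nat.count R (c i) = Nat.count P i := by
  have hfilter : {j ∈ Finset.range (c i) | R j} = {j ∈ Finset.range i | P j}.image c := by
    ext k
    have hk : R k ↔ ∃ j, P j ∧ c j = k := (Set.ext_iff.1 himage k).symm
    simp only [Finset.mem_filter, Finset.mem_range, Finset.mem_image, hk]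
    constructor
    · rintro ⟨hlt, j, hj, rfl⟩
      exact ⟨j, ⟨(hmono.lt_iff_lt hj hi).1 hlt, hj⟩, rfl⟩
    · rintro ⟨j, ⟨hlt, hj⟩, rfl⟩
      exact ⟨hmono hj hi hlt, j, hj, rfl⟩
  rw [Nat.count_eq_card_filter_range, Nat.count_eq_card_filter_range, hfilter]
  refine Finset.card_image_of_injOn (hmono.injOn.mono fun j hj => ?_)
  exact (Finset.mem_filter.1 hj).2

theorem subseq_eq_subseq_of_strictMonoOn (hmono : StrictMonoOn c {i | P i})
    (himage : c '' {i | P i} = {j | R j}) (hg : ∀ i, P i → g i = f (c i)) :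
    subseq g P = subseq f R := by
  funext k
  refine Option.ext fun a => ?_
  rw [subseq_eq_some_iff, subseq_eq_some_iff]
  constructor
  · rintro ⟨i, hi, rfl, ha⟩
    exact ⟨c i, himage.subset ⟨i, hi, rfl⟩, count_apply_of_strictMonoOn hmono himage hi,
      hg i hi ▸ ha⟩
  · rintro ⟨j, hj, rfl, ha⟩
    obtain ⟨i, hi, rfl⟩ := himage.superset hj
    exact ⟨i, hi, (count_apply_of_strictMonoOn hmono himage hi).symm, (hg i hi).trans ha⟩

/-- Position `i` starts a new block of equal entries of `g`; `nsTrace g` keeps exactly the entries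
at these positions. -/
def IsChangeAt (g : ℕ → Option α) (i : ℕ) : Prop :=
  (g i).isSome ∧ (i = 0 ∨ g i ≠ g (i - 1))

theorem isChangeAt_zero : IsChangeAt g 0 ↔ (g 0).isSome := by
  simp [IsChangeAt]

theorem isChangeAt_succ : IsChangeAt g (i + 1) ↔ (g (i + 1)).isSome ∧ g (i + 1) ≠ g i := by
  simp [IsChangeAt]

/-- `g` is a stuttering of `f`: a finite or infinite sequence obtained from `f` by repeating
entries finitely or, for the last one, infinitely often. Position `i` of `g` is a copy of
position `c i` of `f`; `c` is unconstrained by `f` past the end of `g`. -/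
structure IsStuttering (c : ℕ → ℕ) (g f : ℕ → Option α) : Prop where
  zero : c 0 = 0
  succ : ∀ i, c (i + 1) = c i ∨ c (i + 1) = c i + 1
  isSome_of_succ : ∀ i, (g (i + 1)).isSome → (g i).isSome
  apply_eq : ∀ i, (g i).isSome → g i = f (c i)
  exists_apply_eq : ∀ k, (f k).isSome → ∃ i, (g i).isSome ∧ c i = k

namespace IsStuttering

theorem monotone (h : IsStuttering c g f) : Monotone c :=
  monotone_nat_of_le_succ fun i => by have := h.succ i; omega

theorem succ_eq_of_isChangeAt (h : IsStuttering c g f) (hi : IsChangeAt g (i + 1)) :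
    c (i + 1) = c i + 1 := by
  rw [isChangeAt_succ] at hi
  refine (h.succ i).resolve_left fun hstay => hi.2 ?_
  rw [h.apply_eq _ hi.1, h.apply_eq _ (h.isSome_of_succ i hi.1), hstay]

theorem isChangeAt_apply (h : IsStuttering c g f) (hi : IsChangeAt g i) :
    IsChangeAt f (c i) := by
  cases i with
  | zero => simpa only [isChangeAt_zero, h.apply_eq 0 hi.1, h.zero] using hi
  | succ i =>
    have hjump := h.succ_eq_of_isChangeAt hi
    rw [isChangeAt_succ] at hi
    rwa [hjump, isChangeAt_succ, ← hjump, ← h.apply_eq _ hi.1,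
      ← h.apply_eq _ (h.isSome_of_succ i hi.1)]

theorem exists_isChangeAt (h : IsStuttering c g f) {k : ℕ} (hk : IsChangeAt f k) :
    ∃ i, IsChangeAt g i ∧ c i = k := by
  -- The first copy of a changed entry of `f` is where `g` changes.
  have hcopy := h.exists_apply_eq k hk.1
  obtain ⟨hsome, hfirst⟩ := Nat.find_spec hcopy
  refine ⟨Nat.find hcopy, ?_, hfirst⟩
  cases hfind : Nat.find hcopy with
  | zero => exact isChangeAt_zero.2 (hfind ▸ hsome)
  | succ i =>
    rw [hfind] at hsome hfirst
    have hprev := h.isSome_of_succ i hsome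
    have hne : c i ≠ k := fun hci => Nat.find_min hcopy (hfind ▸ i.lt_succ_self) ⟨hprev, hci⟩
    obtain rfl : k = c i + 1 := by have := h.succ i; omega
    rw [isChangeAt_succ] at hk ⊢
    exact ⟨hsome, by rw [h.apply_eq _ hsome, hfirst, h.apply_eq _ hprev]; exact hk.2⟩

theorem strictMonoOn_isChangeAt (h : IsStuttering c g f) :
    StrictMonoOn c {i | IsChangeAt g i} := by
  rintro i - (_ | j) hj hij
  · exact absurd hij i.not_lt_zero
  · have hjump := h.succ_eq_of_isChangeAt hj
    have hle := h.monotone (Nat.le_of_lt_succ hij)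
    omega

theorem image_isChangeAt (h : IsStuttering c g f) :
    c '' {i | IsChangeAt g i} = {k | IsChangeAt f k} :=
  Set.Subset.antisymm (Set.image_subset_iff.2 fun _ => h.isChangeAt_apply)
    fun _ => h.exists_isChangeAt

theorem nsTrace_eq (h : IsStuttering c g f) : nsTrace g = nsTrace f :=
  subseq_eq_subseq_of_strictMonoOn h.strictMonoOn_isChangeAt h.image_isChangeAt
    fun i hi => h.apply_eq i hi.1

end IsStuttering

end Subsequences

namespace TPath

variable {S A V l : Type*} {Tr : S → A → S → Prop} {I : Set A} (p : TPath Tr) {i : ℕ}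

/-- The `i`-th transition of the path exists and is visible with respect to the set `I` of
invisible actions. -/
def IsVisibleAt (I : Set A) (i : ℕ) : Prop :=
  (i : ℕ∞) < p.len ∧ p.acts i ∉ I

/-- The projection of the action sequence onto the visible actions, i.e. the sequence compared
by `WeakEquiv`; `none` past its end. -/
noncomputable def visibleWord (I : Set A) : ℕ → Option A :=
  subseq p.actSeq (p.IsVisibleAt I)

variable {p}

theorem visibleWord_count (hi : p.IsVisibleAt I i) :
    p.visibleWord I (Nat.count (p.IsVisibleAt I) i) = some (p.acts i) :=
  (subseq_count hi).trans (if_pos hi.1)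

theorem lt_len_of_succ_le_len (hi : ((i + 1 : ℕ) : ℕ∞) ≤ p.len) : (i : ℕ∞) < p.len :=
  (Nat.cast_lt.2 i.lt_succ_self).trans_le hi

theorem isSome_labelSeq {L : S → Set l} : (p.labelSeq L i).isSome ↔ (i : ℕ∞) ≤ p.len := by
  simp [labelSeq]

theorem reach_states {s₀ : S} (h₀ : Reach Tr s₀ (p.states 0)) (hi : (i : ℕ∞) ≤ p.len) :
    Reach Tr s₀ (p.states i) := by
  induction i with
  | zero => exact h₀
  | succ i ih =>
    have hlt := lt_len_of_succ_le_len hi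
    exact (ih hlt.le).step (p.valid i hlt)

end TPath

/-- The run from `x` of the deterministic system with transition function `step` on the finite
or infinite word `w`; `none` past the end of `w`. -/
def wordRun {A V : Type*} (step : A → V → V) (x : V) (w : ℕ → Option A) : ℕ → Option V
  | 0 => some x
  | k + 1 => Option.map₂ step (w k) (wordRun step x w k)

namespace TPath

variable {S A V l : Type*} {Tr : S → A → S → Prop} {I : Set A} {p : TPath Tr}
  {v : S → V} {step : A → V → V}

theorem wordRun_visibleWord
    (hstep : ∀ i : ℕ, p.IsVisibleAt I i →
      v (p.states (i + 1)) = step (p.acts i) (v (p.states i)))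
    (hinv : ∀ i : ℕ, (i : ℕ∞) < p.len → p.acts i ∈ I → v (p.states (i + 1)) = v (p.states i))
    {i : ℕ} (hi : (i : ℕ∞) ≤ p.len) :
    wordRun step (v (p.states 0)) (p.visibleWord I) (Nat.count (p.IsVisibleAt I) i) =
      some (v (p.states i)) := by
  induction i with
  | zero => rfl
  | succ i ih =>
    have hlt := lt_len_of_succ_le_len hi
    by_cases hvis : p.IsVisibleAt I i
    · rw [Nat.count_succ, if_pos hvis, wordRun, visibleWord_count hvis, ih hlt.le,
        Option.map₂_some_some, hstep i hvis]
    · have hmem : p.acts i ∈ I := not_not.1 fun hnot => hvis ⟨hlt, hnot⟩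
      rw [Nat.count_succ, if_neg hvis, Nat.add_zero, ih hlt.le, hinv i hlt hmem]

theorem exists_count_eq_of_isSome_wordRun {x : V} {k : ℕ}
    (hk : (wordRun step x (p.visibleWord I) k).isSome) :
    ∃ i : ℕ, (i : ℕ∞) ≤ p.len ∧ Nat.count (p.IsVisibleAt I) i = k := by
  cases k with
  | zero => exact ⟨0, zero_le, Nat.count_zero _⟩
  | succ k =>
    have hword : (p.visibleWord I k).isSome := by
      by_contra hnone
      simp [wordRun, Option.not_isSome_iff_eq_none.1 hnone] at hk
    obtain ⟨i, hi, rfl⟩ := exists_count_eq_of_isSome_subseq hword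
    exact ⟨i + 1, by exact_mod_cast Order.add_one_le_of_lt hi.1,
      by rw [Nat.count_succ, if_pos hi]⟩

theorem isStuttering_labelSeq
    (hstep : ∀ i : ℕ, p.IsVisibleAt I i →
      v (p.states (i + 1)) = step (p.acts i) (v (p.states i)))
    (hinv : ∀ i : ℕ, (i : ℕ∞) < p.len → p.acts i ∈ I → v (p.states (i + 1)) = v (p.states i))
    (M : V → Set l) :
    IsStuttering (Nat.count (p.IsVisibleAt I)) (p.labelSeq (M ∘ v))
      fun k => (wordRun step (v (p.states 0)) (p.visibleWord I) k).map M where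
  zero := Nat.count_zero _
  succ i := by rw [Nat.count_succ]; split_ifs <;> simp
  isSome_of_succ i hi :=
    isSome_labelSeq.2 (lt_len_of_succ_le_len (isSome_labelSeq.1 hi)).le
  apply_eq i hi := by
    rw [isSome_labelSeq] at hi
    rw [wordRun_visibleWord hstep hinv hi, labelSeq, if_pos hi]
    rfl
  exists_apply_eq k hk := by
    rw [Option.isSome_map] at hk
    simpa only [isSome_labelSeq] using exists_count_eq_of_isSome_wordRun hk

end TPath

theorem WeakEquiv.stutterEquiv {S A V l : Type*} {Tr : S → A → S → Prop} {s₀ : S} {I : Set A}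
    {v : S → V} {step : A → V → V} {L : S → Set l}
    {p q : TPath Tr} (hweak : WeakEquiv I p q) (hreach : Reach Tr s₀ (p.states 0))
    (h₀ : p.states 0 = q.states 0) (hstep : ∀ s a t, Tr s a t → v t = step a (v s))
    (hinv : ∀ a ∈ I, ∀ s t, Reach Tr s₀ s → Tr s a t → v s = v t) (hL : L.FactorsThrough v) :
    StutterEquiv L L p q := by
  obtain ⟨M, rfl⟩ := (Function.factorsThrough_iff L).1 hL
  have htrace (r : TPath Tr) (hr : Reach Tr s₀ (r.states 0)) :
      nsTrace (r.labelSeq (M ∘ v)) =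
        nsTrace fun k => (wordRun step (v (r.states 0)) (r.visibleWord I) k).map M :=
    (TPath.isStuttering_labelSeq (fun i hi => hstep _ _ _ (r.valid i hi.1))
      (fun i hi ha => (hinv _ ha _ _ (TPath.reach_states hr hi.le) (r.valid i hi)).symm)
      M).nsTrace_eq
  have hword : p.visibleWord I = q.visibleWord I := hweak.2
  exact ⟨hweak.1, by rw [htrace p hreach, htrace q (h₀ ▸ hreach), hword, h₀]⟩

namespace LinProp

variable {P T : Type*} [Fintype P]

/-- The change of the linear left-hand side of `q` caused by firing `t`, in any marking. -/
def effect (q : LinProp P) (N : PetriNet P T) (t : T) : ℤ :=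
  ∑ x, q.coef x * ((N.post t x : ℤ) - N.pre x t)

theorem value_of_fires (q : LinProp P) {N : PetriNet P T} {m m' : P → ℕ} {t : T}
    (h : N.Fires m t m') : q.value m' = q.value m + q.effect N t := by
  rw [value, value, effect, ← Finset.sum_add_distrib]
  refine Finset.sum_congr rfl fun x _ => ?_
  obtain ⟨hpre, hm'⟩ := h x
  rw [hm']
  push_cast [Nat.cast_sub hpre]
  ring

theorem factorsThrough_values (Q : Set (LinProp P)) :
    (fun m : P → ℕ => {q ∈ Q | q.sat m}).FactorsThrough fun m (q : Q) => q.1.value m := by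
  intro m m' hvalues
  ext q
  refine and_congr_right fun hq => ?_
  have hvalue : q.value m = q.value m' := congrFun hvalues ⟨q, hq⟩
  rw [sat, sat, hvalue]

end LinProp

theorem petri_reach_value_invisibility_consistent_for_linear_general {P T : Type*}
    [Fintype P] (N : PetriNet P T) (Q : Set (LinProp P)) :
    ∀ p q : TPath N.Fires,
      Reach N.Fires N.m0 (p.states 0) → p.states 0 = q.states 0 →
      WeakEquiv {t : T | ∀ qp ∈ Q, ∀ m m', Reach N.Fires N.m0 m → N.Fires m t m' →
          LinProp.value qp m = LinProp.value qp m'} p q →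
      StutterEquiv (fun m => {qp ∈ Q | qp.sat m}) (fun m => {qp ∈ Q | qp.sat m})
        p q := by
  intro p q hreach h₀ hweak
  exact hweak.stutterEquiv hreach h₀
    (v := fun m (qp : Q) => qp.1.value m) (step := fun t x qp => x qp + qp.1.effect N t)
    (fun _ _ _ hfires => funext fun qp => qp.1.value_of_fires hfires)
    (fun _ ht m m' hm hfires => funext fun qp => ht qp.1 qp.2 m m' hm hfires)
    (LinProp.factorsThrough_values Q)

/-- Under reach value invisibility, the LSTS underlying a Petri net is
labelled consistently for linear propositions: paths through reachable markings starting
in a common reachable marking that are weakly equivalent w.r.t. the set of reach value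
invisible structural transitions are stutter equivalent under the labelling by linear
propositions. -/
theorem petri_reach_value_invisibility_consistent_for_linear {P T : Type*}
    [Fintype P] [Fintype T] (N : PetriNet P T) (Q : Set (LinProp P)) :
    ∀ p q : TPath N.Fires,
      Reach N.Fires N.m0 (p.states 0) → p.states 0 = q.states 0 →
      WeakEquiv {t : T | ∀ qp ∈ Q, ∀ m m', Reach N.Fires N.m0 m → N.Fires m t m' →
          LinProp.value qp m = LinProp.value qp m'} p q →
      StutterEquiv (fun m => {qp ∈ Q | qp.sat m}) (fun m => {qp ∈ Q | qp.sat m})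
        p q :=
  petri_reach_value_invisibility_consistent_for_linear_general N Q
end

section
/- Under reach value invisibility, the LSTS underlying a Petri net is not necessarily labelled consistently for polynomial propositions: there exist a Petri net, a labelling L_p of its markings by a single polynomial proposition, and two initial paths π and π' that are weakly equivalent with respect to the set of reach value invisible structural transitions but not stutter equivalent under L_p. -/
open scoped Classical

/-!
The counterexample is a counter guarded by a single token on a place `permit`: `increment` needs
that token but keeps it, `close` consumes it. In a reachable marking that enables `increment`,
`permit` holds exactly one token, so the polynomial `counter * (1 - permit)` is `0` both before and
after the step, and `increment` is reach value invisible. Yet `increment` changes the effect of a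
later `close`: the path `close` keeps the polynomial at `0`, whereas `increment close` ends with
value `1`. Dropping the invisible `increment` gives the same projection for both paths, but stutter
equivalent paths visit the same labels.
-/

section Subseq

variable {α : Type*} {g : ℕ → Option α} {P : ℕ → Prop}

theorem infinite_or_lt_ncard_iff {k : ℕ} :
    {i | P i}.Infinite ∨ k < {i | P i}.ncard ↔
      ∀ hP : {i | P i}.Finite, k < hP.toFinset.card := by
  refine ⟨?_, fun h => ?_⟩
  · rintro (hinf | hk) hP
    · exact absurd hP hinf
    · rwa [← Set.ncard_eq_toFinset_card _ hP]
  · refine (Set.finite_or_infinite {i | P i}).symm.imp_right fun hP => ?_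
    rw [Set.ncard_eq_toFinset_card _ hP]
    exact h hP

theorem some_mem_range_subseq {x : α} :
    some x ∈ Set.range (subseq g P) ↔ ∃ i, P i ∧ g i = some x := by
  constructor
  · rintro ⟨k, hk⟩
    rw [subseq, Option.ite_none_right_eq_some, infinite_or_lt_ncard_iff] at hk
    exact ⟨Nat.nth P k, Nat.nth_mem k hk.1, hk.2⟩
  · rintro ⟨i, hi, hx⟩
    obtain ⟨k, hk, rfl⟩ := Nat.exists_lt_card_nth_eq hi
    exact ⟨k, by rw [subseq, if_pos (infinite_or_lt_ncard_iff.2 hk), hx]⟩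

theorem subseq_comp_strictMono {f : ℕ → ℕ} (hf : StrictMono f)
    (hP : ∀ i, P i → i ∈ Set.range f) :
    subseq (g ∘ f) (P ∘ f) = subseq g P := by
  have himage : {i | P i} = f '' {i | (P ∘ f) i} :=
    (Set.image_preimage_eq_of_subset hP).symm
  have hselected (k : ℕ) : ({i | (P ∘ f) i}.Infinite ∨ k < {i | (P ∘ f) i}.ncard) ↔
      ({i | P i}.Infinite ∨ k < {i | P i}.ncard) := by
    rw [himage, Set.infinite_image_iff hf.injective.injOn,
      Set.ncard_image_of_injective _ hf.injective]
  funext k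
  simp only [subseq, hselected]
  split_ifs with hk
  · exact congrArg g (Nat.nth_comp_of_strictMono hf hP (infinite_or_lt_ncard_iff.1 hk))
  · rfl

theorem some_mem_range_nsTrace {x : α} :
    some x ∈ Set.range (nsTrace g) ↔ some x ∈ Set.range g := by
  rw [nsTrace, some_mem_range_subseq]
  refine ⟨fun ⟨i, _, hi⟩ => ⟨i, hi⟩, fun hx => ?_⟩
  -- The first occurrence of `x` differs from its predecessor.
  refine ⟨Nat.find hx, ⟨?_, ?_⟩, Nat.find_spec hx⟩
  · rw [Nat.find_spec hx, Option.isSome_some]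
  · refine or_iff_not_imp_left.2 fun hpos heq => ?_
    exact Nat.find_min hx (Nat.sub_one_lt hpos) (heq ▸ Nat.find_spec hx)

end Subseq

namespace TPath

variable {S A : Type*} {Tr : S → A → S → Prop}

/-- The path consisting of the single transition `s -a→ t`. -/
def single {s t : S} {a : A} (h : Tr s a t) : TPath Tr where
  states
    | 0 => s
    | _ + 1 => t
  acts _ := a
  len := 1
  valid i hi := by
    obtain rfl : i = 0 := by simpa using hi
    exact h

/-- The path that performs `s -a→ p.states 0` and then follows `p`. -/
def cons {s : S} {a : A} (p : TPath Tr) (h : Tr s a (p.states 0)) : TPath Tr where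
  states
    | 0 => s
    | i + 1 => p.states i
  acts
    | 0 => a
    | i + 1 => p.acts i
  len := p.len + 1
  valid
    | 0, _ => h
    | i + 1, hi => p.valid i (by simpa using hi)

theorem some_mem_range_labelSeq {l : Type*} {p : TPath Tr} {L : S → Set l} {x : Set l} :
    some x ∈ Set.range (p.labelSeq L) ↔ ∃ i : ℕ, (i : ℕ∞) ≤ p.len ∧ L (p.states i) = x := by
  simp [labelSeq]

end TPath

section Equivalences

variable {S₁ S₂ A A₁ A₂ l : Type*}

theorem StutterEquiv.exists_label_eq {Tr₁ : S₁ → A₁ → S₁ → Prop} {Tr₂ : S₂ → A₂ → S₂ → Prop}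
    {L₁ : S₁ → Set l} {L₂ : S₂ → Set l} {p : TPath Tr₁} {q : TPath Tr₂}
    (h : StutterEquiv L₁ L₂ p q) {j : ℕ} (hj : (j : ℕ∞) ≤ q.len) :
    ∃ i : ℕ, (i : ℕ∞) ≤ p.len ∧ L₁ (p.states i) = L₂ (q.states j) := by
  rw [← TPath.some_mem_range_labelSeq, ← some_mem_range_nsTrace, h.2, some_mem_range_nsTrace,
    TPath.some_mem_range_labelSeq]
  exact ⟨j, hj, rfl⟩

variable {Tr₁ : S₁ → A → S₁ → Prop} {Tr₂ : S₂ → A → S₂ → Prop} {I : Set A}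

theorem weakEquiv_single {s₁ t₁ : S₁} {s₂ t₂ : S₂} {a : A} (h₁ : Tr₁ s₁ a t₁)
    (h₂ : Tr₂ s₂ a t₂) : WeakEquiv I (TPath.single h₁) (TPath.single h₂) :=
  ⟨Iff.rfl, rfl⟩

theorem WeakEquiv.cons_right {p : TPath Tr₁} {q : TPath Tr₂} (hpq : WeakEquiv I p q) {s : S₂}
    {a : A} (h : Tr₂ s a (q.states 0)) (ha : a ∈ I) : WeakEquiv I p (q.cons h) := by
  have hvisible (i : ℕ) (hi : (i : ℕ∞) < (q.cons h).len ∧ (q.cons h).acts i ∉ I) :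
      i ∈ Set.range Nat.succ := by
    cases i with
    | zero => exact absurd ha hi.2
    | succ i => exact ⟨i, rfl⟩
  refine ⟨hpq.1.trans (by simp [TPath.cons]), hpq.2.trans ?_⟩
  rw [← subseq_comp_strictMono Order.succ_strictMono hvisible]
  congr 1 <;> funext i <;> simp [TPath.actSeq, TPath.cons]

end Equivalences

section PetriNets

variable {P T : Type*}

/-- The reach value invisible structural transitions of `N` with respect to a single polynomial
proposition. -/
def PetriNet.reachValueInvisible (N : PetriNet P T) (φ : PolyProp P) : Set T :=
  {t | ∀ m m', Reach N.Fires N.m0 m → N.Fires m t m' → φ.value m = φ.value m'}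

theorem Reach.marking_le {N : PetriNet P T} {m₀ m : P → ℕ} (h : Reach N.Fires m₀ m) {p : P}
    (hp : ∀ t, N.post t p ≤ N.pre p t) : m p ≤ m₀ p := by
  induction h with
  | refl => exact le_rfl
  | @step m t m' _ hfires ih =>
    have := hfires p
    have := hp t
    omega

theorem PolyProp.sat_iff_of_setOf_sat_eq {φ : PolyProp P} {m m' : P → ℕ}
    (h : {ψ ∈ ({φ} : Set (PolyProp P)) | ψ.sat m} = {ψ ∈ ({φ} : Set (PolyProp P)) | ψ.sat m'}) :
    φ.sat m ↔ φ.sat m' := by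
  simpa using Set.ext_iff.1 h φ

end PetriNets

namespace GuardedCounter

/-- The places of the guarded counter. -/
inductive Place
  | counter | permit
  deriving DecidableEq

/-- The structural transitions of the guarded counter. -/
inductive Transition
  | increment | close
  deriving DecidableEq

open Place Transition

instance : Fintype Place where
  elems := {counter, permit}
  complete := by rintro (_ | _) <;> simp

instance : Fintype Transition where
  elems := {increment, close}
  complete := by rintro (_ | _) <;> simp

/-- The marking with `n` tokens on `counter` and `k` tokens on `permit`. -/
def marking (n k : ℕ) : Place → ℕ
  | counter => n
  | permit => k

/-- The guarded counter: `increment` adds a token to `counter` and needs, but preserves, a token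
on `permit`; `close` consumes a token on `permit`. -/
def net : PetriNet Place Transition where
  pre
    | counter, _ => 0
    | permit, _ => 1
  post
    | increment, _ => 1
    | close, _ => 0
  m0 := marking 0 1

/-- The polynomial proposition `counter * (1 - permit) = 0`. -/
noncomputable def prop : PolyProp Place where
  poly := MvPolynomial.X counter * (1 - MvPolynomial.X permit)
  cmp := .eq
  const := 0

theorem value_prop (m : Place → ℕ) : prop.value m = m counter * (1 - m permit) := by
  simp [PolyProp.value, prop]

theorem sat_prop_marking {n k : ℕ} : prop.sat (marking n k) ↔ n = 0 ∨ k = 1 := by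
  change prop.value (marking n k) = 0 ↔ _
  rw [value_prop, mul_eq_zero, sub_eq_zero, eq_comm (a := (1 : ℤ))]
  norm_cast

theorem fires_increment (n : ℕ) :
    net.Fires (marking n 1) increment (marking (n + 1) 1) := by
  rintro (_ | _) <;> simp [net, marking]

theorem fires_close (n : ℕ) : net.Fires (marking n 1) close (marking n 0) := by
  rintro (_ | _) <;> simp [net, marking]

theorem permit_le_one {m : Place → ℕ} (h : Reach net.Fires net.m0 m) : m permit ≤ 1 :=
  h.marking_le (by rintro (_ | _) <;> simp [net])

theorem increment_mem_reachValueInvisible : increment ∈ net.reachValueInvisible prop := by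
  intro m m' hreach hfires
  obtain ⟨hpos, hpermit'⟩ : 1 ≤ m permit ∧ m' permit = m permit - 1 + 1 := hfires permit
  have hpermit : m permit = 1 := (permit_le_one hreach).antisymm hpos
  simp [value_prop, hpermit, hpermit']

/-- The initial path `close`. -/
def closePath : TPath net.Fires :=
  .single (fires_close 0)

/-- The initial path `increment close`. -/
def incrementClosePath : TPath net.Fires :=
  (TPath.single (fires_close 1)).cons (fires_increment 0)

theorem weakEquiv_closePath_incrementClosePath :
    WeakEquiv (net.reachValueInvisible prop) closePath incrementClosePath :=
  (weakEquiv_single _ _).cons_right _ increment_mem_reachValueInvisible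

theorem sat_prop_closePath (i : ℕ) : prop.sat (closePath.states i) := by
  cases i with
  | zero => exact (sat_prop_marking (n := 0) (k := 1)).2 (.inl rfl)
  | succ i => exact (sat_prop_marking (n := 0) (k := 0)).2 (.inl rfl)

theorem not_sat_prop_incrementClosePath : ¬ prop.sat (incrementClosePath.states 2) :=
  fun h => by simpa using (sat_prop_marking (n := 1) (k := 0)).1 h

end GuardedCounter

/-- Under reach value invisibility, the LSTS underlying a Petri net is not
necessarily labelled consistently for polynomial propositions: there exist a Petri net,
a labelling of its markings by a single polynomial proposition, and two initial paths
that are weakly equivalent w.r.t. the set of reach value invisible structural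
transitions but not stutter equivalent under that labelling. -/
theorem petri_reach_value_invisibility_not_consistent_for_polynomial :
    ∃ (P T : Type) (_ : Fintype P) (_ : Fintype T) (N : PetriNet P T)
      (q0 : PolyProp P) (p q : TPath N.Fires),
      p.states 0 = N.m0 ∧ q.states 0 = N.m0 ∧
      WeakEquiv {t : T | ∀ m m', Reach N.Fires N.m0 m → N.Fires m t m' →
          PolyProp.value q0 m = PolyProp.value q0 m'} p q ∧
      ¬ StutterEquiv (fun m => {qp ∈ ({q0} : Set (PolyProp P)) | qp.sat m})
          (fun m => {qp ∈ ({q0} : Set (PolyProp P)) | qp.sat m}) p q := by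
  open GuardedCounter in
  refine ⟨Place, Transition, inferInstance, inferInstance, net, prop, closePath,
    incrementClosePath, rfl, rfl, weakEquiv_closePath_incrementClosePath, fun hstutter => ?_⟩
  obtain ⟨i, -, hlabel⟩ := hstutter.exists_label_eq (j := 2) le_rfl
  exact not_sat_prop_incrementClosePath
    ((PolyProp.sat_iff_of_setOf_sat_eq hlabel).1 (sat_prop_closePath i))
end
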